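/- Let d ≥ 1, k ≥ 2, and m ≥ k be integers with m > d. Every (k,m)-agreeable ℝ^d-convex society has agreement proportion at least 1 - (1 - C(k,d+1)/C(m,d+1))^{1/(d+1)}. Precisely: if V is a finite set of n ≥ m voters with convex approval sets A_v ⊆ ℝ^d such that every m-element subset of V includes k voters whose approval sets have a common point, then there exists a point of ℝ^d contained in at least (1 - (1 - C(k,d+1)/C(m,d+1))^{1/(d+1)}) · n of the sets A_v, where C(a,b) denotes the binomial coefficient. -/

import Mathlib

open scoped Nat

/-- A functional vanishing on `N` points of the moment curve vanishes. -/
lemma moment_functional {α : Type*} (N : ℕ) (x : α → ℝ) (hx : Function.Injective x)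
    (l : (Fin N → ℝ) →ₗ[ℝ] ℝ) (T : Finset α) (hT : N ≤ T.card)
    (h : ∀ v ∈ T, l (fun j : Fin N => x v ^ (j : ℕ)) = 0) : l = 0 := by
  classical
  let P : Polynomial ℝ := ∑ j : Fin N, Polynomial.C (l (Pi.single j 1)) * Polynomial.X ^ (j : ℕ)
  have hP : P = 0 := by
    apply Polynomial.eq_zero_of_degree_lt_of_eval_finset_eq_zero (T.image x)
    · rw [Finset.card_image_of_injective _ hx]
      refine lt_of_lt_of_le ?_ (Nat.cast_le.mpr hT)
      exact Polynomial.degree_sum_fin_lt _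
    · intro y hy
      obtain ⟨v, hv, rfl⟩ := Finset.mem_image.mp hy
      rw [← h v hv, pi_eq_sum_univ' (fun j : Fin N => x v ^ (j : ℕ))]
      simp only [P, Polynomial.eval_finsetSum, map_sum, map_smul]
      refine Finset.sum_congr rfl fun j _ => ?_
      simp only [Polynomial.eval_mul, Polynomial.eval_C, Polynomial.eval_pow, Polynomial.eval_X,
        smul_eq_mul]
      rw [mul_comm]
  apply (Pi.basisFun ℝ (Fin N)).ext
  intro j
  have := congrArg (fun Q => Polynomial.coeff Q (j : ℕ)) hP
  simpa [P, Polynomial.coeff_X_pow, Polynomial.finsetSum_coeff, Fin.val_inj, eq_comm] using this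

lemma alt_zero_of_image {α : Type*} [DecidableEq α] {N s : ℕ} (r : α → Fin N → ℝ)
    (f : (Fin N → ℝ) [⋀^Fin s]→ₗ[ℝ] ℝ) (t t' : Fin s → α)
    (ht : Function.Injective t)
    (him : Finset.univ.image t = Finset.univ.image t') (h : f (fun i => r (t' i)) = 0) :
    f (fun i => r (t i)) = 0 := by
  have h1 : ∀ i, ∃ j, t' j = t i := by
    intro i
    have : t i ∈ Finset.univ.image t' := by rw [← him]; simp
    simpa using this
  choose σ hσ using h1
  have hinj : Function.Injective σ := by
    intro i j hij
    apply ht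
    rw [← hσ, ← hσ, hij]
  let e : Equiv.Perm (Fin s) := Equiv.ofBijective σ (Finite.injective_iff_bijective.mp hinj)
  have := f.map_perm (fun i => r (t' i)) e
  have h2 : (fun i => r (t i)) = (fun i => r (t' i)) ∘ e := by
    ext i; simp [e, hσ]
  rw [h2, this, h, smul_zero]

lemma abstract_upper {α : Type*} [Fintype α] [DecidableEq α] (d N : ℕ)
    (hN : N ≤ Fintype.card α) (F : Finset (Finset α))
    (w : Finset α → ℝ)
    (h : ∀ S ∈ F, S.card = d + 1 → ∃ a ∈ S, ∃ Z : Finset α, Disjoint Z (S.erase a) ∧ N ≤ Z.card + d ∧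
      ∀ v ∈ Z, insert v (S.erase a) ∈ F → w S < w (insert v (S.erase a))) :
    N.choose (d + 1) ≤ ((Finset.univ.powersetCard (d + 1)) \ F).card := by
  classical
  by_contra! hlt
  let x : α → ℝ := fun v => ((Fintype.equivFin α v : ℕ) : ℝ)
  have hx : Function.Injective x := by
    intro a b hab
    simpa [x, Fin.val_inj] using hab
  let r : α → Fin N → ℝ := fun v j => x v ^ (j : ℕ)
  let NF := (Finset.univ.powersetCard (d + 1)) \ F
  have he : ∀ S : NF, ∃ t : Fin (d + 1) → α, Function.Injective t ∧ Finset.univ.image t = S.1 := by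
    intro S
    have hc : S.1.card = d + 1 := by
      have := S.2
      simp only [NF, Finset.mem_sdiff, Finset.mem_powersetCard] at this
      exact this.1.2
    let e := S.1.equivFinOfCardEq hc
    refine ⟨fun i => (e.symm i).1, Subtype.val_injective.comp e.symm.injective, ?_⟩
    ext v
    simp only [Finset.mem_image, Finset.mem_univ, true_and]
    constructor
    · rintro ⟨i, rfl⟩; exact (e.symm i).2
    · intro hv; exact ⟨e ⟨v, hv⟩, by simp⟩
  choose e he1 he2 using he
  let L : (⋀[ℝ]^(d+1) (Fin N → ℝ) →ₗ[ℝ] ℝ) →ₗ[ℝ] (NF → ℝ) :=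
    LinearMap.pi fun S => LinearMap.applyₗ (exteriorPower.ιMulti ℝ (d+1) (fun i => r (e S i)))
  have hfr : Module.finrank ℝ (NF → ℝ) < Module.finrank ℝ (⋀[ℝ]^(d+1) (Fin N → ℝ) →ₗ[ℝ] ℝ) := by
    rw [Module.finrank_linearMap, exteriorPower.finrank_eq]
    simpa using hlt
  obtain ⟨g, hg, hg0⟩ := Submodule.exists_mem_ne_zero_of_ne_bot
    (LinearMap.ker_ne_bot_of_finrank_lt (f := L) hfr)
  let f : (Fin N → ℝ) [⋀^Fin (d+1)]→ₗ[ℝ] ℝ := exteriorPower.alternatingMapLinearEquiv.symm g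
  have hf0 : f ≠ 0 := by
    simpa [f] using hg0
  have hfnf : ∀ t : Fin (d+1) → α, Function.Injective t → Finset.univ.image t ∉ F →
      f (fun i => r (t i)) = 0 := by
    intro t ht hF
    have hmem : Finset.univ.image t ∈ NF := by
      simp only [NF, Finset.mem_sdiff, Finset.mem_powersetCard]
      exact ⟨⟨Finset.subset_univ _, by simp [Finset.card_image_of_injective _ ht]⟩, hF⟩
    refine alt_zero_of_image r f t (e ⟨_, hmem⟩) ht (he2 ⟨_, hmem⟩).symm ?_
    have := congrFun (LinearMap.mem_ker.mp hg) ⟨_, hmem⟩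
    simpa [L, f] using this
  have hall : ∀ t : Fin (d+1) → α, f (fun i => r (t i)) = 0 := by
    by_contra! hne
    have hne' : {t : Fin (d+1) → α | f (fun i => r (t i)) ≠ 0}.Nonempty := hne
    obtain ⟨t, ht, hmax⟩ := Set.exists_max_image _ (fun t => w (Finset.univ.image t))
      (Set.toFinite _) hne'
    have hinj : ∀ t : Fin (d+1) → α, f (fun i => r (t i)) ≠ 0 → Function.Injective t := by
      intro t ht
      by_contra hni
      apply ht
      apply f.map_eq_zero_of_not_injective
      intro hh
      apply hni
      exact Function.Injective.of_comp (f := r) hh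
    have hmF : ∀ t : Fin (d+1) → α, f (fun i => r (t i)) ≠ 0 → Finset.univ.image t ∈ F := by
      intro t ht
      by_contra hF
      exact ht (hfnf t (hinj t ht) hF)
    have hti := hinj t ht
    obtain ⟨a, ha, Z, hZd, hZc, hZ⟩ := h _ (hmF t ht)
      (by simp [Finset.card_image_of_injective _ hti])
    obtain ⟨i, -, rfl⟩ := Finset.mem_image.mp ha
    set I := (Finset.univ.image t).erase (t i) with hI
    have hIc : I.card = d := by
      rw [hI, Finset.card_erase_of_mem ha, Finset.card_image_of_injective _ hti]; simp
    have hz : f.toMultilinearMap.toLinearMap (fun i => r (t i)) i = 0 := by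
      apply moment_functional N x hx _ (Z ∪ I)
      · rw [Finset.card_union_of_disjoint hZd, hIc]; exact hZc
      · intro v hv
        have hup : Function.update (fun i => r (t i)) i (r v) = fun j => r (Function.update t i v j) := by
          ext j
          by_cases hj : j = i
          · subst hj; simp
          · simp [hj]
        change f (Function.update (fun i => r (t i)) i (r v)) = 0
        rw [hup]
        rcases Finset.mem_union.mp hv with hv | hv
        · by_contra hn
          have h1 := hmax _ hn
          have himg : Finset.univ.image (Function.update t i v) = insert v I := by
            ext u
            simp only [hI, Finset.mem_image, Finset.mem_univ, true_and, Finset.mem_insert,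
              Finset.mem_erase]
            constructor
            · rintro ⟨j, rfl⟩
              by_cases hj : j = i
              · subst hj; simp
              · right
                simp only [ne_eq, hj, not_false_eq_true, Function.update_of_ne]
                exact ⟨fun hh => hj (hti hh), j, rfl⟩
            · rintro (rfl | ⟨hw, j, rfl⟩)
              · exact ⟨i, by simp⟩
              · refine ⟨j, ?_⟩
                have : j ≠ i := fun hh => hw (by rw [hh])
                simp [this]
          have h2 := hmF _ hn
          simp only [himg] at h1 h2
          exact absurd (hZ v hv h2) (not_lt.mpr h1)
        · obtain ⟨hvi, hv⟩ := Finset.mem_erase.mp hv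
          obtain ⟨j, -, rfl⟩ := Finset.mem_image.mp hv
          have hji : j ≠ i := fun hh => hvi (by rw [hh])
          apply f.map_eq_zero_of_eq _ (i := i) (j := j) _ hji.symm
          simp [hji]
    apply ht
    have := LinearMap.congr_fun hz (r (t i))
    simpa using this
  apply hf0
  let q : Fin N → α := fun j => (Fintype.equivFin α).symm (Fin.castLE hN j)
  have hq : Function.Injective q := by
    intro a b hab
    simpa [q] using hab
  have hli : LinearIndependent ℝ (fun j : Fin N => r (q j)) := by
    have : (Matrix.vandermonde (fun j => x (q j))).det ≠ 0 :=
      Matrix.det_vandermonde_ne_zero_iff.mpr (hx.comp hq)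
    exact Matrix.linearIndependent_rows_of_det_ne_zero this
  let b := basisOfLinearIndependentOfCardEqFinrank' _ hli (by simp)
  apply b.ext_alternating
  intro v _
  simpa [b] using hall (fun i => q (v i))

lemma double_count {α : Type*} [Fintype α] [DecidableEq α] (s m c : ℕ) (hsm : s ≤ m)
    (hmn : m ≤ Fintype.card α)
    (F : Finset (Finset α)) (hF : ∀ S ∈ F, S.card = s)
    (h : ∀ W : Finset α, W.card = m → c ≤ (F.filter (· ⊆ W)).card) :
    (Fintype.card α).choose s * c ≤ F.card * m.choose s := by
  set n := Fintype.card α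
  have h1 : n.choose m * c ≤ F.card * (n - s).choose (m - s) := by
    have e1 : ∑ W ∈ (Finset.univ : Finset α).powersetCard m, (F.filter (· ⊆ W)).card
        = ∑ S ∈ F, (((Finset.univ : Finset α).powersetCard m).filter (S ⊆ ·)).card := by
      exact Finset.sum_card_bipartiteAbove_eq_sum_card_bipartiteBelow (fun (W S : Finset α) => S ⊆ W)
    calc n.choose m * c = ∑ W ∈ (Finset.univ : Finset α).powersetCard m, c := by
          simp [n]
      _ ≤ _ := Finset.sum_le_sum (fun W hW => h W (Finset.mem_powersetCard.mp hW).2)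
      _ = _ := e1
      _ ≤ ∑ S ∈ F, (n - s).choose (m - s) := by
          refine Finset.sum_le_sum fun S hS => ?_
          have : (n - s).choose (m - s) = (Sᶜ.powersetCard (m - s)).card := by
            rw [Finset.card_powersetCard, Finset.card_compl, hF S hS]
          rw [this]
          refine Finset.card_le_card_of_injOn (fun W => W \ S) ?_ ?_
          · intro W hW
            simp only [Finset.coe_filter, Finset.mem_powersetCard, Set.mem_ofPred_eq] at hW
            simp only [Finset.mem_coe, Finset.mem_powersetCard]
            refine ⟨fun v hv => by simp at hv ⊢; exact hv.2, ?_⟩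
            rw [Finset.card_sdiff_of_subset hW.2, hW.1.2, hF S hS]
          · intro W hW W' hW' hh
            simp only [Finset.coe_filter, Finset.mem_powersetCard, Set.mem_ofPred_eq] at hW hW'
            rw [← Finset.sdiff_union_of_subset hW.2, ← Finset.sdiff_union_of_subset hW'.2]
            exact congrArg (· ∪ S) hh
      _ = _ := by simp
  have h2 := Nat.choose_mul (n := n) hsm
  have hpos : 0 < (n - s).choose (m - s) := Nat.choose_pos (by omega)
  refine Nat.le_of_mul_le_mul_right ?_ hpos
  calc n.choose s * c * (n - s).choose (m - s) = (n.choose m * c) * m.choose s := by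
        rw [mul_right_comm, ← h2]; ring
    _ ≤ _ := Nat.mul_le_mul_right _ h1
    _ = _ := by ring

lemma min_norm_unique {E : Type*} [NormedAddCommGroup E] [InnerProductSpace ℝ E] (K : Set E)
    (hK : Convex ℝ K) (p q : E) (hp : p ∈ K) (hq : q ∈ K) (hmin : ∀ y ∈ K, ‖p‖ ≤ ‖y‖)
    (hqp : ‖q‖ ≤ ‖p‖) : p = q := by
  have hm : (1/2 : ℝ) • p + (1/2 : ℝ) • q ∈ K := hK hp hq (by norm_num) (by norm_num) (by norm_num)
  have h1 := hmin _ hm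
  have h2 := parallelogram_law_with_norm ℝ p q
  have h3 : ‖(1/2 : ℝ) • p + (1/2 : ℝ) • q‖ = (1/2) * ‖p + q‖ := by
    rw [← smul_add, norm_smul]; norm_num
  have h4 : ‖p - q‖ * ‖p - q‖ ≤ 0 := by
    nlinarith [norm_nonneg p, norm_nonneg q, norm_nonneg (p + q)]
  have h5 : ‖p - q‖ = 0 := by nlinarith [norm_nonneg (p - q)]
  exact sub_eq_zero.mp (norm_eq_zero.mp h5)

/-- Helly-type lemma: the minimal norm is already determined by `d` of the `d+1` sets. -/
lemma helly_min {α : Type*} [DecidableEq α] (d : ℕ) (B : α → Set (EuclideanSpace ℝ (Fin d)))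
    (hB : ∀ v, Convex ℝ (B v)) (S : Finset α) (hS : S.card = d + 1)
    (p : EuclideanSpace ℝ (Fin d)) (hp : p ∈ ⋂ v ∈ S, B v)
    (hmin : ∀ y ∈ ⋂ v ∈ S, B v, ‖p‖ ≤ ‖y‖) :
    ∃ a ∈ S, ∀ y ∈ ⋂ v ∈ S.erase a, B v, ‖p‖ ≤ ‖y‖ := by
  by_contra! hcon
  let G : Option α → Set (EuclideanSpace ℝ (Fin d)) := fun o => o.elim (Metric.ball 0 ‖p‖) B
  have hfr : Module.finrank ℝ (EuclideanSpace ℝ (Fin d)) = d := by simp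
  have : (⋂ i ∈ Finset.insertNone S, G i).Nonempty := by
    apply Convex.helly_theorem (𝕜 := ℝ)
    · rw [hfr, Finset.card_insertNone]; omega
    · intro o _
      cases o with
      | none => exact convex_ball _ _
      | some v => exact hB v
    · intro J hJ hJc
      rw [hfr] at hJc
      by_cases hn : none ∈ J
      · have hex : ∃ a ∈ S, some a ∉ J := by
          by_contra! hh
          have : Finset.insertNone S ⊆ J := by
            intro o ho
            cases o with
            | none => exact hn
            | some v => exact hh v (by simpa using ho)
          have := Finset.card_le_card this
          rw [Finset.card_insertNone] at this
          omega
        obtain ⟨a, ha, haJ⟩ := hex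
        obtain ⟨y, hy, hyn⟩ := hcon a ha
        refine ⟨y, ?_⟩
        simp only [Set.mem_iInter] at hy ⊢
        intro o ho
        cases o with
        | none => simpa [G] using hyn
        | some v =>
          refine hy v (Finset.mem_erase.mpr ⟨?_, by simpa using hJ ho⟩)
          rintro rfl
          exact haJ ho
      · refine ⟨p, ?_⟩
        simp only [Set.mem_iInter] at hp ⊢
        intro o ho
        cases o with
        | none => exact absurd ho hn
        | some v => exact hp v (by simpa using hJ ho)
  obtain ⟨y, hy⟩ := this
  simp only [Set.mem_iInter] at hy
  have h1 : ‖y‖ < ‖p‖ := by simpa [G] using hy none (by simp)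
  have h2 : ‖p‖ ≤ ‖y‖ := by
    apply hmin
    simp only [Set.mem_iInter]
    intro v hv
    exact hy (some v) (by simpa using hv)
  linarith

open Classical in
lemma closed_upper {α : Type*} [Fintype α] (d M : ℕ)
    (hdM : d ≤ M) (hM : M ≤ Fintype.card α) (B : α → Set (EuclideanSpace ℝ (Fin d)))
    (hB : ∀ v, Convex ℝ (B v)) (hBc : ∀ v, IsClosed (B v))
    (hdepth : ∀ p, (Finset.univ.filter (fun v => p ∈ B v)).card ≤ M) :
    (Fintype.card α - M + d).choose (d + 1) ≤
      ((Finset.univ.powersetCard (d + 1)).filter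
        (fun S : Finset α => ¬ (⋂ v ∈ S, B v).Nonempty)).card := by
  have hex : ∀ S : Finset α, ∃ p, (⋂ v ∈ S, B v).Nonempty →
      p ∈ (⋂ v ∈ S, B v) ∧ ∀ y ∈ ⋂ v ∈ S, B v, ‖p‖ ≤ ‖y‖ := by
    intro S
    by_cases hne : (⋂ v ∈ S, B v).Nonempty
    · have hcl : IsClosed (⋂ v ∈ S, B v) := isClosed_biInter fun v _ => hBc v
      obtain ⟨p, hp, hp2⟩ := hcl.exists_infDist_eq_dist hne 0
      refine ⟨p, fun _ => ⟨hp, fun y hy => ?_⟩⟩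
      have := Metric.infDist_le_dist_of_mem (x := 0) hy
      rw [hp2] at this
      simpa using this
    · exact ⟨0, fun h => absurd h hne⟩
  choose p hp using hex
  have key := abstract_upper (α := α) d (Fintype.card α - M + d) (by omega)
    (Finset.univ.filter (fun S : Finset α => (⋂ v ∈ S, B v).Nonempty)) (fun S => ‖p S‖) ?_
  · refine key.trans (Finset.card_le_card ?_)
    intro S
    simp only [Finset.mem_sdiff, Finset.mem_filter, Finset.mem_univ, true_and]
    exact id
  · intro S hS hSc
    have hSn : (⋂ v ∈ S, B v).Nonempty := by simpa using hS
    obtain ⟨hpS, hpm⟩ := hp S hSn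
    obtain ⟨a, ha, hmin⟩ := helly_min d B hB S hSc (p S) hpS hpm
    have hpI : p S ∈ ⋂ v ∈ S.erase a, B v := by
      simp only [Set.mem_iInter] at hpS ⊢
      exact fun v hv => hpS v (Finset.mem_of_mem_erase hv)
    refine ⟨a, ha, Finset.univ.filter (fun v => p S ∉ B v), ?_, ?_, ?_⟩
    · rw [Finset.disjoint_left]
      intro v hv hv2
      simp only [Finset.mem_filter, Finset.mem_univ, true_and] at hv
      simp only [Set.mem_iInter] at hpI
      exact hv (hpI v hv2)
    · have h1 := hdepth (p S)
      have h2 := Finset.card_filter_add_card_filter_not (s := (Finset.univ : Finset α))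
        (fun v => p S ∈ B v)
      rw [Finset.card_univ] at h2
      omega
    · intro v hv hF
      simp only [Finset.mem_filter, Finset.mem_univ, true_and] at hv hF
      obtain ⟨hq, -⟩ := hp _ hF
      by_contra! hle
      have hqI : p (insert v (S.erase a)) ∈ ⋂ v ∈ S.erase a, B v := by
        simp only [Set.mem_iInter] at hq ⊢
        exact fun u hu => hq u (Finset.mem_insert_of_mem hu)
      have := min_norm_unique _ (convex_iInter₂ fun v _ => hB v) _ _ hpI hqI hmin hle
      apply hv
      rw [this]
      simp only [Set.mem_iInter] at hq
      exact hq v (Finset.mem_insert_self _ _)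

open Classical in
lemma general_upper {α : Type*} [Fintype α] (d M : ℕ)
    (hdM : d ≤ M) (hM : M ≤ Fintype.card α) (A : α → Set (Fin d → ℝ))
    (hA : ∀ v, Convex ℝ (A v))
    (hdepth : ∀ p, (Finset.univ.filter (fun v => p ∈ A v)).card ≤ M) :
    (Fintype.card α - M + d).choose (d + 1) ≤
      ((Finset.univ.powersetCard (d + 1)).filter
        (fun S : Finset α => ¬ (⋂ v ∈ S, A v).Nonempty)).card := by
  let e := (WithLp.linearEquiv 2 ℝ (Fin d → ℝ))
  let Q : Finset α → EuclideanSpace ℝ (Fin d) := fun S =>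
    if h : (⋂ v ∈ S, A v).Nonempty then e.symm h.some else 0
  have hQ : ∀ S : Finset α, (⋂ v ∈ S, A v).Nonempty → ∀ v ∈ S, e (Q S) ∈ A v := by
    intro S h v hv
    have := h.some_mem
    simp only [Q, h, dif_pos, LinearEquiv.apply_symm_apply]
    exact Set.mem_iInter₂.mp this v hv
  let B : α → Set (EuclideanSpace ℝ (Fin d)) := fun v =>
    convexHull ℝ (Q '' {S | v ∈ S ∧ (⋂ v ∈ S, A v).Nonempty})
  have hBA : ∀ v, B v ⊆ e ⁻¹' A v := by
    intro v
    apply convexHull_min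
    · rintro _ ⟨S, ⟨hv, hS⟩, rfl⟩
      exact hQ S hS v hv
    · exact (hA v).linear_preimage e.toLinearMap
  refine (closed_upper d M hdM hM B (fun v => convex_convexHull _ _) ?_ ?_).trans ?_
  · intro v
    exact ((Set.toFinite _).isCompact_convexHull (𝕜 := ℝ)).isClosed
  · intro p
    refine le_trans (Finset.card_le_card ?_) (hdepth (e p))
    intro v
    simp only [Finset.mem_filter, Finset.mem_univ, true_and]
    exact fun h => hBA v h
  · apply Finset.card_le_card
    intro S
    simp only [Finset.mem_filter]
    rintro ⟨h1, h2⟩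
    refine ⟨h1, fun h3 => h2 ⟨Q S, ?_⟩⟩
    simp only [Set.mem_iInter]
    intro v hv
    exact subset_convexHull _ _ ⟨S, ⟨hv, h3⟩, rfl⟩

open Classical in
lemma fintype_main {α : Type*} [Fintype α] (d k m : ℕ) (hkm : k ≤ m) (hmd : d < m)
    (hnm : m ≤ Fintype.card α)
    (A : α → Set (Fin d → ℝ)) (hA : ∀ v, Convex ℝ (A v))
    (hagree : ∀ W : Finset α, W.card = m →
      ∃ K ⊆ W, K.card = k ∧ (⋂ v ∈ K, A v).Nonempty) :
    ∃ p : Fin d → ℝ,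
      (1 - (1 - (k.choose (d + 1) : ℝ) / (m.choose (d + 1))) ^ ((1 : ℝ) / (d + 1)))
        * (Fintype.card α) ≤ (Finset.univ.filter (fun v => p ∈ A v)).card := by
  set n := Fintype.card α with hn
  set c := fun p : Fin d → ℝ => (Finset.univ.filter (fun v => p ∈ A v)).card with hc
  have hcn : ∀ p, c p ≤ n := fun p => (Finset.card_le_univ _)
  obtain ⟨p, hpmax⟩ : ∃ p, ∀ q, c q ≤ c p := by
    have hfin : (Set.range c).Finite := (Set.finite_Iic n).subset (by rintro _ ⟨p, rfl⟩; exact hcn p)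
    obtain ⟨_, ⟨p, rfl⟩, hp⟩ := Set.exists_max_image _ id hfin (Set.range_nonempty c)
    exact ⟨p, fun q => hp _ ⟨q, rfl⟩⟩
  refine ⟨p, ?_⟩
  change _ ≤ ((c p : ℕ) : ℝ)
  have hmpos : (0 : ℝ) < m.choose (d + 1) := by exact_mod_cast Nat.choose_pos (by omega)
  set β : ℝ := 1 - (k.choose (d + 1) : ℝ) / (m.choose (d + 1)) with hβ
  have hβ0 : 0 ≤ β := by
    rw [hβ, sub_nonneg, div_le_one hmpos]
    exact_mod_cast Nat.choose_le_choose _ hkm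
  by_cases hkd : k < d + 1
  · have : β = 1 := by simp [hβ, Nat.choose_eq_zero_of_lt hkd]
    rw [this]; simp
  push Not at hkd
  -- some point has depth at least `k`
  have hdM : d ≤ c p := by
    obtain ⟨W, -, hW⟩ := Finset.exists_subset_card_eq (s := (Finset.univ : Finset α)) (n := m)
      (by simpa using hnm)
    obtain ⟨K, -, hKc, q, hq⟩ := hagree W hW
    have : k ≤ c q := by
      rw [← hKc]
      apply Finset.card_le_card
      intro v hv
      simpa using Set.mem_iInter₂.mp hq v hv
    have := hpmax q
    omega
  have hup := general_upper d (c p) hdM (hcn p) A hA hpmax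
  rw [← hn] at hup
  set F := (Finset.univ.powersetCard (d + 1)).filter
        (fun S : Finset α => (⋂ v ∈ S, A v).Nonempty) with hF
  have hdc := double_count (d + 1) m (k.choose (d + 1)) (by omega) hnm F
    (by intro S hS; simp only [hF, Finset.mem_filter, Finset.mem_powersetCard] at hS; exact hS.1.2)
    (by
      intro W hW
      obtain ⟨K, hKW, hKc, q, hq⟩ := hagree W hW
      rw [← hKc, ← Finset.card_powersetCard]
      apply Finset.card_le_card
      intro S hS
      simp only [Finset.mem_powersetCard] at hS
      simp only [hF, Finset.mem_filter, Finset.mem_powersetCard]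
      refine ⟨⟨⟨Finset.subset_univ _, hS.2⟩, q, ?_⟩, hS.1.trans hKW⟩
      simp only [Set.mem_iInter] at hq ⊢
      exact fun v hv => hq v (hS.1 hv))
  rw [← hn] at hdc
  have hsum := Finset.card_filter_add_card_filter_not
    (s := (Finset.univ : Finset α).powersetCard (d + 1))
    (fun S : Finset α => (⋂ v ∈ S, A v).Nonempty)
  rw [Finset.card_powersetCard, Finset.card_univ, ← hn] at hsum
  have hsum2 : F.card + ((Finset.univ.powersetCard (d + 1)).filter
        (fun S : Finset α => ¬ (⋂ v ∈ S, A v).Nonempty)).card = n.choose (d + 1) := by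
    rw [hF, ← hsum]
  have hb : ((n - c p + d).choose (d + 1) : ℝ) ≤ β * n.choose (d + 1) := by
    have h1 : ((n - c p + d).choose (d + 1) : ℝ) + F.card ≤ n.choose (d + 1) := by
      exact_mod_cast (by omega : (n - c p + d).choose (d + 1) + F.card ≤ n.choose (d + 1))
    have h2 : (n.choose (d + 1) : ℝ) * k.choose (d + 1) ≤ F.card * m.choose (d + 1) := by
      exact_mod_cast hdc
    have h3 : (n.choose (d + 1) : ℝ) * ((k.choose (d + 1) : ℝ) / m.choose (d + 1)) ≤ F.card := by
      rw [← mul_div_assoc, div_le_iff₀ hmpos]; exact h2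
    rw [hβ]; linarith
  have hl := Nat.pow_le_choose (α := ℝ) (d + 1) (n - c p + d)
  have hu := Nat.choose_le_pow_div (α := ℝ) (d + 1) n
  have hfac : (0 : ℝ) < ((d + 1)! : ℕ) := by exact_mod_cast Nat.factorial_pos _
  rw [show n - c p + d + 1 - (d + 1) = n - c p by omega] at hl
  have hfin : ((n - c p : ℕ) : ℝ) ^ (d + 1) ≤ β * (n : ℝ) ^ (d + 1) := by
    have := hl.trans (hb.trans (mul_le_mul_of_nonneg_left hu hβ0))
    rw [← mul_div_assoc, div_le_div_iff_of_pos_right hfac] at this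
    exact this
  rw [Nat.cast_sub (hcn p)] at hfin
  have hroot : (β ^ ((1 : ℝ) / (d + 1))) ^ (d + 1) = β := by
    rw [one_div]
    exact_mod_cast Real.rpow_inv_natCast_pow hβ0 (Nat.succ_ne_zero d)
  rw [← hroot, ← mul_pow] at hfin
  have := le_of_pow_le_pow_left₀ (Nat.succ_ne_zero d) (by positivity) hfin
  linarith

/-- Let `d ≥ 1`, `k ≥ 2`, `m ≥ k` with `m > d`.  Every `(k,m)`-agreeable
`ℝ^d`-convex society with `n` voters has a point contained in at least
`(1 - (1 - C(k,d+1)/C(m,d+1))^(1/(d+1))) * n` of the approval sets. -/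
theorem agreeable_convex_society_agreement_proportion
    {ι : Type*} (d k m : ℕ) (hd : 1 ≤ d) (hk : 2 ≤ k) (hkm : k ≤ m) (hmd : d < m)
    (V : Finset ι) (n : ℕ) (hn : V.card = n) (hnm : m ≤ n)
    (A : ι → Set (Fin d → ℝ)) (hconv : ∀ v ∈ V, Convex ℝ (A v))
    (hagree : ∀ W ⊆ V, W.card = m →
      ∃ K ⊆ W, K.card = k ∧ (⋂ v ∈ K, A v).Nonempty) :
    ∃ p : Fin d → ℝ,
      (1 - (1 - (k.choose (d + 1) : ℝ) / (m.choose (d + 1))) ^ ((1 : ℝ) / (d + 1))) * n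
        ≤ {v ∈ (V : Set ι) | p ∈ A v}.ncard := by
  classical
  subst hn
  have key := fintype_main (α := V) d k m hkm hmd (by simpa using hnm) (fun v => A v)
    (fun v => hconv v v.2) ?_
  · obtain ⟨p, hp⟩ := key
    refine ⟨p, ?_⟩
    rw [Fintype.card_coe] at hp
    refine hp.trans (Nat.cast_le.mpr ?_)
    rw [← Set.ncard_coe_finset]
    have hinj : Function.Injective (Subtype.val : V → ι) := Subtype.val_injective
    rw [← Set.ncard_image_of_injective _ hinj]
    apply Set.ncard_le_ncard _ ((Finset.finite_toSet V).subset fun v hv => hv.1)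
    rintro _ ⟨v, hv, rfl⟩
    exact ⟨v.2, by simpa using hv⟩
  · intro W hW
    obtain ⟨K, hKW, hKc, q, hq⟩ := hagree (W.map (Function.Embedding.subtype _))
      (by intro v hv; simp at hv; exact hv.1) (by simpa using hW)
    refine ⟨K.subtype (· ∈ V), ?_, ?_, q, ?_⟩
    · intro v hv
      have := hKW (Finset.mem_subtype.mp hv)
      simpa using this
    · rw [Finset.card_subtype, Finset.filter_true_of_mem, hKc]
      intro v hv
      have := hKW hv
      simp at this
      exact this.1
    · simp only [Set.mem_iInter] at hq ⊢
      intro v hv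
      exact hq v (Finset.mem_subtype.mp hv)
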